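/- arXiv:2007.10889 — 2 statements merged into one kernel-verified Lean document; each statement's English description precedes it below -/
import Mathlib

section
/- The full blur shift Σ, with the topology generated by the generalized cylinders, is a regular topological space: every closed set C ⊆ Σ and every point y ∉ C can be separated by disjoint open sets. -/
open Set Filter Topology

namespace BlurPaper

/-- The extended alphabet `Ā = A ⊕ V`, where each blurred set `H ∈ V` is regarded
as a new symbol `H̃`. -/
abbrev Symb (A : Type*) (V : Set (Set A)) := A ⊕ {H : Set A // H ∈ V}

/-- `V` is a family of blurred sets: every member is infinite and two distinct members
have finite intersection. -/
def IsBlurFamily {A : Type*} (V : Set (Set A)) : Prop :=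
  (∀ H ∈ V, H.Infinite) ∧ ∀ G ∈ V, ∀ H ∈ V, G ≠ H → (G ∩ H).Finite

/-- The full blur shift `Σ`: sequences over `Ā` such that a blur symbol is followed
by the same blur symbol. -/
def FullBlur (A : Type*) (V : Set (Set A)) : Set (ℕ → Symb A V) :=
  {x | ∀ (i : ℕ) (H : {H : Set A // H ∈ V}), x i = Sum.inr H → x (i + 1) = Sum.inr H}

/-- Generalized cylinder `Z(α)`. -/
def Z (A : Type*) (V : Set (Set A)) (α : List A) : Set (FullBlur A V) :=
  {x | ∀ i : Fin α.length, x.1 i = Sum.inl (α.get i)}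

/-- Generalized cylinder `Z(α, H, F)`. -/
def ZH (A : Type*) (V : Set (Set A)) (α : List A) (H : {H : Set A // H ∈ V})
    (F : Set A) : Set (FullBlur A V) :=
  {x | (∀ i : Fin α.length, x.1 i = Sum.inl (α.get i)) ∧
    (x.1 α.length = Sum.inr H ∨ ∃ a ∈ H.1 \ F, x.1 α.length = Sum.inl a)}

/-- The collection of all generalized cylinders. -/
def Cylinders (A : Type*) (V : Set (Set A)) : Set (Set (FullBlur A V)) :=
  {U | ∃ α : List A, U = Z A V α} ∪
  {U | ∃ (α : List A) (H : {H : Set A // H ∈ V}) (F : Set A),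
    F ⊆ H.1 ∧ F.Finite ∧ U = ZH A V α H F}

/-- The topology on the full blur shift generated by the generalized cylinders. -/
def tau (A : Type*) (V : Set (Set A)) : TopologicalSpace (FullBlur A V) :=
  TopologicalSpace.generateFrom (Cylinders A V)

/-- The shift map on the full blur shift. -/
def shift (A : Type*) (V : Set (Set A)) : FullBlur A V → FullBlur A V :=
  fun x => ⟨fun i => x.1 (i + 1), fun i H h => x.2 (i + 1) H h⟩

/-- The shift map on `A^ℕ`. -/
def shiftSeq (A : Type*) : (ℕ → A) → ℕ → A := fun x i => x (i + 1)

/-- The prodiscrete topology on `A^ℕ` (product of discrete topologies). -/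
def prodDiscrete (A : Type*) : TopologicalSpace (ℕ → A) :=
  @Pi.topologicalSpace ℕ (fun _ => A) fun _ => ⊥

/-- A (classical) shift space over `A`: closed in the prodiscrete topology and
invariant under the shift map. -/
def IsShiftSpace {A : Type*} (Λ : Set (ℕ → A)) : Prop :=
  @IsClosed _ (prodDiscrete A) Λ ∧ ∀ x ∈ Λ, shiftSeq A x ∈ Λ

/-- `w ∈ B(Y)`: the finite word `w` appears as an initial word of some element of `Y`. -/
def InLang {A : Type*} (Y : Set (ℕ → A)) (w : List A) : Prop :=
  ∃ x ∈ Y, ∀ i : Fin w.length, x i = w.get i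

/-- The follower set `F_Y(w) = {a : w a ∈ B(Y)}`. -/
def Fol {A : Type*} (Y : Set (ℕ → A)) (w : List A) : Set A :=
  {a | InLang Y (w ++ [a])}

/-- The predecessor set `P_Y(a) = {b : b a ∈ B(Y)}`. -/
def Pred {A : Type*} (Y : Set (ℕ → A)) (a : A) : Set A :=
  {b | InLang Y [b, a]}

/-- `B₁(Y)`: the set of letters occurring in sequences of `Y`. -/
def letters {A : Type*} (Y : Set (ℕ → A)) : Set A :=
  {a | ∃ x ∈ Y, ∃ i, x i = a}

/-- The canonical embedding `A^ℕ → Σ`. -/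
def embed (A : Type*) (V : Set (Set A)) : (ℕ → A) → FullBlur A V :=
  fun x => ⟨fun i => Sum.inl (x i), fun _ _ h => absurd h (by simp)⟩

/-- The point `(a₀ … a_{n-1} H̃ H̃ H̃ …)` of the full blur shift. -/
def wordBlur {A : Type*} {V : Set (Set A)} (α : List A) (H : {H : Set A // H ∈ V}) :
    FullBlur A V :=
  ⟨fun i => if h : i < α.length then Sum.inl (α.get ⟨i, h⟩) else Sum.inr H, by
    intro i K hK
    by_cases h : i < α.length
    · simp only [dif_pos h] at hK
      exact absurd hK (by simp)
    · simp only [dif_neg h] at hK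
      simp only [dif_neg (by omega : ¬ i + 1 < α.length)]
      exact hK⟩

/-- The boundary `∂Y`: points `(a₀ … a_{n-1} H̃ H̃ …)` with `a₀ … a_{n-1} ∈ B(Y)` and
`F_Y(a₀ … a_{n-1}) ∩ H` infinite. -/
def boundary (A : Type*) (V : Set (Set A)) (Y : Set (ℕ → A)) : Set (FullBlur A V) :=
  {z | ∃ (α : List A) (H : {H : Set A // H ∈ V}),
    z = wordBlur α H ∧ InLang Y α ∧ (Fol Y α ∩ H.1).Infinite}

/-- The blur shift space `Σ_Y = Y ∪ ∂Y` of `Y` with resolution `V`. -/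
def SigmaOf (A : Type*) (V : Set (Set A)) (Y : Set (ℕ → A)) : Set (FullBlur A V) :=
  embed A V '' Y ∪ boundary A V Y

/-- The subspace topology inherited from the full blur shift. -/
def subTau (A : Type*) (V : Set (Set A)) (X : Set (FullBlur A V)) :
    TopologicalSpace X :=
  TopologicalSpace.induced Subtype.val (tau A V)

/-- `V_Λ`: the blurred sets that appear in `Σ_Λ`, i.e. those meeting `B₁(Λ)` in an
infinite set. -/
def VLam (A : Type*) (V : Set (Set A)) (Λ : Set (ℕ → A)) : Set (Set A) :=
  {H | H ∈ V ∧ (letters Λ ∩ H).Infinite}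


theorem mem_Z_snoc {A : Type*} {V : Set (Set A)} (α : List A) (a : A) (x : FullBlur A V) :
    x ∈ Z A V (α ++ [a]) ↔ x ∈ Z A V α ∧ x.1 α.length = Sum.inl a := by
  simp only [Z, mem_setOf_eq]
  constructor
  · intro h
    constructor
    · intro i
      have := h ⟨i.1, by simp only [List.length_append]; have := i.2; omega⟩
      simpa [List.getElem_append] using this
    · have := h ⟨α.length, by simp⟩
      simpa using this
  · rintro ⟨h, h2⟩ ⟨i, hi⟩
    simp only [List.length_append, List.length_singleton] at hi
    rcases Nat.lt_succ_iff_lt_or_eq.mp hi with h3 | h3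
    · have := h ⟨i, h3⟩
      simpa [List.getElem_append, h3] using this
    · subst h3
      simpa using h2

theorem isOpen_Z {A : Type*} (V : Set (Set A)) (α : List A) :
    IsOpen[tau A V] (Z A V α) :=
  TopologicalSpace.GenerateOpen.basic _ (Or.inl ⟨α, rfl⟩)

theorem isOpen_ZH {A : Type*} (V : Set (Set A)) (α : List A) (H : {H : Set A // H ∈ V})
    (F : Set A) (hF : F ⊆ H.1) (hf : F.Finite) :
    IsOpen[tau A V] (ZH A V α H F) :=
  TopologicalSpace.GenerateOpen.basic _ (Or.inr ⟨α, H, F, hF, hf, rfl⟩)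

/-- Sets of points whose next symbol lies in an open set of symbols are open. -/
theorem isOpen_next {A : Type*} (V : Set (Set A)) (α : List A) (T : Set (Symb A V))
    (hT : ∀ H : {H : Set A // H ∈ V}, Sum.inr H ∈ T →
      {a | a ∈ H.1 ∧ (Sum.inl a : Symb A V) ∉ T}.Finite) :
    IsOpen[tau A V] {x | x ∈ Z A V α ∧ x.1 α.length ∈ T} := by
  letI := tau A V
  rw [isOpen_iff_forall_mem_open]
  rintro x ⟨hx, hxT⟩
  rcases hs : x.1 α.length with b | H
  · refine ⟨Z A V (α ++ [b]), ?_, isOpen_Z V _, (mem_Z_snoc _ _ _).2 ⟨hx, hs⟩⟩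
    intro z hz
    obtain ⟨h1, h2⟩ := (mem_Z_snoc _ _ _).1 hz
    refine ⟨h1, ?_⟩
    rw [h2, ← hs]
    exact hxT
  · rw [hs] at hxT
    refine ⟨ZH A V α H _, ?_, isOpen_ZH V α H _ (fun a ha => ha.1) (hT H hxT), hx, Or.inl hs⟩
    rintro z ⟨h1, h2 | ⟨a, ha, h2⟩⟩
    · exact ⟨h1, by rw [h2]; exact hxT⟩
    · refine ⟨h1, ?_⟩
      rw [h2]
      by_contra hc
      exact ha.2 ⟨ha.1, hc⟩

theorem isOpen_compl_Z {A : Type*} (V : Set (Set A)) (α : List A) :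
    IsOpen[tau A V] (Z A V α)ᶜ := by
  letI := tau A V
  induction α using List.reverseRecOn with
  | nil =>
    have : (Z A V [])ᶜ = ∅ := by
      ext x
      simp [Z]
    rw [this]
    exact isOpen_empty
  | append_singleton α a ih =>
    have h : (Z A V (α ++ [a]))ᶜ = (Z A V α)ᶜ ∪
        {x | x ∈ Z A V α ∧ x.1 α.length ∈ ({Sum.inl a}ᶜ : Set (Symb A V))} := by
      ext x
      simp only [mem_compl_iff, mem_Z_snoc, mem_union, mem_setOf_eq, mem_singleton_iff]
      tauto
    rw [h]
    refine ih.union (isOpen_next V α _ fun H _ => (finite_singleton a).subset ?_)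
    rintro b ⟨-, hb⟩
    simpa using hb

theorem isOpen_compl_ZH {A : Type*} (V : Set (Set A)) (hV : IsBlurFamily V) (α : List A)
    (H : {H : Set A // H ∈ V}) (F : Set A) :
    IsOpen[tau A V] (ZH A V α H F)ᶜ := by
  letI := tau A V
  have h : (ZH A V α H F)ᶜ = (Z A V α)ᶜ ∪ {x | x ∈ Z A V α ∧ x.1 α.length ∈
      ({s | s = Sum.inr H ∨ ∃ a ∈ H.1 \ F, s = Sum.inl a}ᶜ : Set (Symb A V))} := by
    ext x
    simp only [mem_compl_iff, mem_union, mem_setOf_eq, ZH, Z]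
    generalize (∀ i : Fin α.length, x.1 i = Sum.inl (α.get i)) = P
    generalize (x.1 α.length = Sum.inr H ∨ ∃ a ∈ H.1 \ F, x.1 α.length = Sum.inl a) = Q
    tauto
  rw [h]
  refine (isOpen_compl_Z V α).union (isOpen_next V α _ fun G hG => ?_)
  have hne : G.1 ≠ H.1 := by
    intro he
    exact hG (Or.inl (congrArg Sum.inr (Subtype.ext he)))
  refine (hV.2 G.1 G.2 H.1 H.2 hne).subset ?_
  rintro a ⟨ha, hb⟩
  simp only [mem_compl_iff, not_not, mem_setOf_eq] at hb
  rcases hb with hb | ⟨c, hc, hb⟩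
  · simp at hb
  · rw [Sum.inl.inj hb] at ha ⊢
    exact ⟨ha, hc.1⟩

theorem exists_clopen {A : Type*} (V : Set (Set A)) (hV : IsBlurFamily V)
    (U : Set (FullBlur A V)) (hU : IsOpen[tau A V] U) :
    ∀ y ∈ U, ∃ K ⊆ U, y ∈ K ∧ IsOpen[tau A V] K ∧ IsOpen[tau A V] Kᶜ := by
  letI := tau A V
  change TopologicalSpace.GenerateOpen (Cylinders A V) U at hU
  induction hU with
  | basic s hs =>
    intro y hy
    refine ⟨s, subset_rfl, hy, TopologicalSpace.GenerateOpen.basic _ hs, ?_⟩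
    rcases hs with ⟨α, rfl⟩ | ⟨α, H, F, -, -, rfl⟩
    · exact isOpen_compl_Z V α
    · exact isOpen_compl_ZH V hV α H F
  | univ =>
    intro y _
    exact ⟨Set.univ, subset_rfl, trivial, isOpen_univ, by rw [compl_univ]; exact isOpen_empty⟩
  | inter s t _ _ ihs iht =>
    rintro y ⟨h1, h2⟩
    obtain ⟨K, hK, hyK, ho, hc⟩ := ihs y h1
    obtain ⟨L, hL, hyL, ho2, hc2⟩ := iht y h2
    exact ⟨K ∩ L, inter_subset_inter hK hL, ⟨hyK, hyL⟩, ho.inter ho2,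
      by rw [compl_inter]; exact hc.union hc2⟩
  | sUnion S _ ih =>
    rintro y ⟨s, hs, hy⟩
    obtain ⟨K, hK, hr⟩ := ih s hs y hy
    exact ⟨K, hK.trans (subset_sUnion_of_mem hs), hr⟩

/-- The full blur shift, with the topology generated by the
generalized cylinders, is regular: every closed set `C` and point `y ∉ C` can be
separated by disjoint open sets. -/
theorem regular_fullBlur {A : Type*} (V : Set (Set A)) (hV : IsBlurFamily V) :
    ∀ C : Set (FullBlur A V), @IsClosed _ (tau A V) C →
      ∀ y : FullBlur A V, y ∉ C →
        ∃ U W : Set (FullBlur A V), @IsOpen _ (tau A V) U ∧ @IsOpen _ (tau A V) W ∧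
          y ∈ U ∧ C ⊆ W ∧ Disjoint U W := by
  intro C hC y hy
  obtain ⟨K, hK, hyK, ho, hc⟩ := exists_clopen V hV Cᶜ hC.isOpen_compl y hy
  exact ⟨K, Kᶜ, ho, hc, hyK, fun x hx hxK => hK hxK hx, disjoint_compl_right⟩

end BlurPaper
end

section
/- Let X be any subset of the full blur shift Σ, with the subspace topology. If X is sequentially compact, then for every finite word α over A (including the empty word) belonging to B(X), the sets V_α := {H ∈ V : the symbol H̃ belongs to F_X(α)} and W_α := (F_X(α) ∩ A) ∖ ⋃_{H ∈ V_α} H are finite. Conversely, if X is closed in Σ and for every such α both V_α and W_α are finite, then X is sequentially compact. -/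
open Set Filter Topology

namespace BlurPaper

/-- `w ∈ B(X)` for a subset `X` of the full blur shift: the word `w` over `Ā`
appears as an initial word of some element of `X`. -/
def InLangS {A : Type*} {V : Set (Set A)} (X : Set (FullBlur A V))
    (w : List (Symb A V)) : Prop :=
  ∃ x ∈ X, ∀ i : Fin w.length, x.1 i = w.get i

/-- The follower set of a word `w` in a subset `X` of the full blur shift. -/
def FolS {A : Type*} {V : Set (Set A)} (X : Set (FullBlur A V))
    (w : List (Symb A V)) : Set (Symb A V) :=
  {b | InLangS X (w ++ [b])}

/-- `V_α`: the blurred sets `H` whose symbol `H̃` belongs to `F_X(α)`. -/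
def Valpha {A : Type*} (V : Set (Set A)) (X : Set (FullBlur A V)) (α : List A) :
    Set {H : Set A // H ∈ V} :=
  {H | Sum.inr H ∈ FolS X (α.map Sum.inl)}

/-- `W_α`: the letters of `A` in `F_X(α)` not covered by `⋃_{H ∈ V_α} H`. -/
def Walpha {A : Type*} (V : Set (Set A)) (X : Set (FullBlur A V)) (α : List A) :
    Set A :=
  {a | Sum.inl a ∈ FolS X (α.map Sum.inl)} \ ⋃ H ∈ Valpha V X α, H.1

theorem inLangS_map {A : Type*} {V : Set (Set A)} (X : Set (FullBlur A V)) (α : List A) :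
    InLangS X (α.map Sum.inl) ↔
      ∃ x ∈ X, ∀ (i : ℕ) (h : i < α.length), x.1 i = Sum.inl (α[i]) := by
  unfold InLangS
  refine exists_congr fun x => and_congr_right fun _ => ?_
  constructor
  · intro h i hi
    have := h ⟨i, by simpa using hi⟩
    simpa using this
  · rintro h ⟨i, hi⟩
    have := h i (by simpa using hi)
    simpa using this

theorem mem_folS {A : Type*} {V : Set (Set A)} (X : Set (FullBlur A V)) (α : List A)
    (b : Symb A V) :
    b ∈ FolS X (α.map Sum.inl) ↔
      ∃ x ∈ X, (∀ (i : ℕ) (h : i < α.length), x.1 i = Sum.inl (α[i])) ∧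
        x.1 α.length = b := by
  unfold FolS InLangS
  refine exists_congr fun x => and_congr_right fun _ => ?_
  constructor
  · intro h
    refine ⟨fun i hi => ?_, ?_⟩
    · have := h ⟨i, by simp; omega⟩
      simpa [List.getElem_append, hi] using this
    · have := h ⟨α.length, by simp⟩
      simpa [List.getElem_append] using this
  · rintro ⟨h, h2⟩ ⟨i, hi⟩
    simp at hi
    by_cases hi' : i < α.length
    · simpa [List.getElem_append, hi'] using h i hi'
    · obtain rfl : i = α.length := by omega
      simpa [List.getElem_append] using h2

theorem exists_word {A : Type*} {V : Set (Set A)} (x : FullBlur A V) (n : ℕ)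
    (h : ∀ j < n, ∃ a, x.1 j = Sum.inl a) :
    ∃ α : List A, α.length = n ∧ ∀ (i : ℕ) (h : i < α.length), x.1 i = Sum.inl (α[i]) := by
  choose f hf using h
  refine ⟨List.ofFn fun i : Fin n => f i i.2, by simp, ?_⟩
  intro i hi
  simp at hi
  simpa using hf i hi

theorem inl_of_le {A : Type*} {V : Set (Set A)} (x : FullBlur A V) {i : ℕ} {a : A}
    (h : x.1 i = Sum.inl a) : ∀ j ≤ i, ∃ b, x.1 j = Sum.inl b := by
  intro j hj
  rcases hx : x.1 j with b | H
  · exact ⟨b, rfl⟩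
  · have : ∀ k, x.1 (j + k) = Sum.inr H := by
      intro k
      induction k with
      | zero => exact hx
      | succ k ih => exact x.2 _ _ ih
    have := this (i - j)
    rw [Nat.add_sub_cancel' hj, h] at this
    simp at this

theorem tendsto_tau {A : Type*} {V : Set (Set A)} (y : ℕ → FullBlur A V)
    (x : FullBlur A V) :
    Tendsto y atTop (@nhds _ (tau A V) x) ↔
      (∀ i a, x.1 i = Sum.inl a → ∀ᶠ k in atTop, (y k).1 i = Sum.inl a) ∧
      (∀ i H, (∀ j < i, ∃ a, x.1 j = Sum.inl a) → x.1 i = Sum.inr H →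
        ∀ F : Set A, F.Finite →
        ∀ᶠ k in atTop, (y k).1 i = Sum.inr H ∨ ∃ a ∈ H.1 \ F, (y k).1 i = Sum.inl a) := by
  unfold tau
  rw [TopologicalSpace.tendsto_nhds_generateFrom_iff]
  constructor
  · intro h
    constructor
    · intro i a hi
      obtain ⟨α, hl, hα⟩ := exists_word x (i + 1)
        (fun j hj => inl_of_le x hi j (by omega))
      have := h (Z A V α) (Or.inl ⟨α, rfl⟩) (fun j => hα j j.2)
      filter_upwards [this] with k hk
      have h1 := hk ⟨i, by omega⟩
      have h2 := hα i (by omega)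
      simp only [List.get_eq_getElem] at h1
      rw [h1, ← h2, hi]
    · intro i H hj hi F hF
      obtain ⟨α, hl, hα⟩ := exists_word x i hj
      have := h (ZH A V α H (F ∩ H.1))
        (Or.inr ⟨α, H, F ∩ H.1, inter_subset_right, hF.subset inter_subset_left, rfl⟩)
        ⟨fun j => hα j j.2, Or.inl (by rw [hl]; exact hi)⟩
      filter_upwards [this] with k hk
      obtain ⟨-, hk⟩ := hk
      rw [hl] at hk
      refine hk.imp id ?_
      rintro ⟨a, ha, hka⟩
      exact ⟨a, ⟨ha.1, fun hf => ha.2 ⟨hf, ha.1⟩⟩, hka⟩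
  · rintro ⟨h1, h2⟩ s hs hxs
    rcases hs with ⟨α, rfl⟩ | ⟨α, H, F, hFH, hF, rfl⟩
    · have : ∀ᶠ k in atTop, ∀ i : Fin α.length, (y k).1 i = Sum.inl (α.get i) :=
        eventually_all.2 fun i => h1 _ _ (hxs i)
      exact this
    · have h3 : ∀ᶠ k in atTop, ∀ i : Fin α.length, (y k).1 i = Sum.inl (α.get i) :=
        eventually_all.2 fun i => h1 _ _ (hxs.1 i)
      have h4 : ∀ᶠ k in atTop, ((y k).1 α.length = Sum.inr H ∨
          ∃ a ∈ H.1 \ F, (y k).1 α.length = Sum.inl a) := by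
        rcases hxs.2 with hx | ⟨a, ha, hx⟩
        · exact h2 _ _ (fun j hj => ⟨_, hxs.1 ⟨j, hj⟩⟩) hx F hF
        · filter_upwards [h1 _ _ hx] with k hk
          exact Or.inr ⟨a, ha, hk⟩
      filter_upwards [h3, h4] with k hk hk'
      exact ⟨hk, hk'⟩

theorem forward_aux {A : Type*} {V : Set (Set A)} (X : Set (FullBlur A V))
    (hX : @IsSeqCompact _ (tau A V) X) (α : List A) (S : Set (Symb A V))
    (hS : S.Infinite) (hSF : S ⊆ FolS X (α.map Sum.inl)) :
    ∃ H ∈ Valpha V X α, ∃ b ∈ S, ∃ c ∈ S, b ≠ c ∧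
      (b = Sum.inr H ∨ ∃ a ∈ H.1, b = Sum.inl a) ∧
      (c = Sum.inr H ∨ ∃ a ∈ H.1, c = Sum.inl a) := by
  let e := hS.natEmbedding
  have hy : ∀ k, ∃ x ∈ X, (∀ (i : ℕ) (h : i < α.length), x.1 i = Sum.inl (α[i])) ∧
        x.1 α.length = (e k).1 := fun k => (mem_folS X α _).1 (hSF (e k).2)
  choose y hyX hyα hye using hy
  obtain ⟨x, hxX, φ, hφ, hlim⟩ := hX hyX
  rw [tendsto_tau] at hlim
  obtain ⟨h1, h2⟩ := hlim
  have hxα : ∀ (i : ℕ) (h : i < α.length), x.1 i = Sum.inl (α[i]) := by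
    intro i
    induction i using Nat.strong_induction_on with
    | _ i ih =>
      intro hi
      rcases hx : x.1 i with a | K
      · obtain ⟨k, hk⟩ := (h1 i a hx).exists
        rw [← hk]
        exact hyα _ i hi
      · obtain ⟨k, hk⟩ := (h2 i K (fun j hj => ⟨_, ih j hj (by omega)⟩) hx {α[i]}
          (finite_singleton _)).exists
        simp only [Function.comp, hyα _ i hi] at hk
        rcases hk with hk | ⟨a, ha, hk⟩
        · simp at hk
        · exact absurd (Sum.inl.inj hk).symm ha.2
  rcases hx : x.1 α.length with a | K
  · exfalso
    obtain ⟨N, hN⟩ := eventually_atTop.1 (h1 _ a hx)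
    have e1 := hN N le_rfl
    have e2 := hN (N + 1) (by omega)
    simp only [Function.comp, hye] at e1 e2
    have := hφ.injective (e.injective (Subtype.ext (e1.trans e2.symm)))
    omega
  · refine ⟨K, (mem_folS X α _).2 ⟨x, hxX, hxα, hx⟩, ?_⟩
    obtain ⟨N, hN⟩ := eventually_atTop.1
      (h2 _ K (fun j hj => ⟨_, hxα j hj⟩) hx ∅ finite_empty)
    have e1 := hN N le_rfl
    have e2 := hN (N + 1) (by omega)
    simp only [Function.comp, hye, sdiff_empty] at e1 e2
    refine ⟨_, (e (φ N)).2, _, (e (φ (N + 1))).2, ?_, e1, e2⟩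
    intro heq
    have := hφ.injective (e.injective (Subtype.ext heq))
    omega

theorem backward_aux {A : Type*} {V : Set (Set A)} (X : Set (FullBlur A V))
    (hfin : ∀ α : List A, InLangS X (α.map Sum.inl) →
        (Valpha V X α).Finite ∧ (Walpha V X α).Finite)
    (y : ℕ → FullBlur A V) (hy : ∀ k, y k ∈ X) :
    ∃ (x : FullBlur A V) (φ : ℕ → ℕ), StrictMono φ ∧
      Tendsto (y ∘ φ) atTop (@nhds _ (tau A V) x) := by
  classical
  let U : Ultrafilter ℕ := hyperfilter ℕ
  have hU : ∀ p : ℕ → Prop, (∀ᶠ k in (U : Filter ℕ), p k) → ∃ᶠ k in atTop, p k := by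
    intro p hp
    exact hp.frequently.filter_mono Nat.hyperfilter_le_atTop
  by_cases hc : ∀ n, ∃ a, ∀ᶠ k in (U : Filter ℕ), (y k).1 n = Sum.inl a
  · choose a ha using hc
    obtain ⟨φ, hφ, h⟩ := extraction_forall_of_frequently
      (P := fun m k => ∀ i : Fin (m + 1), (y k).1 i = Sum.inl (a i))
      (fun m => hU _ (eventually_all.2 fun i => ha i))
    refine ⟨embed A V a, φ, hφ, ?_⟩
    rw [tendsto_tau]
    constructor
    · intro i b hb
      have hb : Sum.inl (a i) = Sum.inl b := hb
      filter_upwards [eventually_ge_atTop i] with k hk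
      rw [← hb]
      exact h k ⟨i, by omega⟩
    · intro i H _ hb
      have hb : Sum.inl (a i) = Sum.inr H := hb
      simp at hb
  · push Not at hc
    have hn := Nat.find_spec hc
    have hlt := fun j (hj : j < Nat.find hc) => Nat.find_min hc hj
    set n := Nat.find hc
    push Not at hlt
    choose f hf using hlt
    obtain ⟨α, hl, hα⟩ : ∃ α : List A, α.length = n ∧
        ∀ (i : ℕ) (h : i < α.length), ∀ᶠ k in (U : Filter ℕ), (y k).1 i = Sum.inl (α[i]) := by
      refine ⟨List.ofFn fun i : Fin n => f i i.2, by simp, ?_⟩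
      intro i hi
      simp at hi
      simpa using hf i hi
    have hα' : ∀ᶠ k in (U : Filter ℕ), ∀ i : Fin α.length, (y k).1 i = Sum.inl (α[i]) :=
      eventually_all.2 fun i => hα i i.2
    have hn' : ∀ a, ∀ᶠ k in (U : Filter ℕ), (y k).1 n ≠ Sum.inl a := hn
    have hB : InLangS X (α.map Sum.inl) := by
      obtain ⟨k, hk⟩ := hα'.exists
      exact (inLangS_map X α).2 ⟨y k, hy k, fun i hi => hk ⟨i, hi⟩⟩
    obtain ⟨hVf, hWf⟩ := hfin α hB
    have hW : ∀ᶠ k in (U : Filter ℕ), ∀ a ∈ Walpha V X α, (y k).1 n ≠ Sum.inl a :=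
      (eventually_all_finite hWf).2 fun a _ => hn' a
    have hex : ∃ H ∈ Valpha V X α, ∀ᶠ k in (U : Filter ℕ),
        ((y k).1 n = Sum.inr H ∨ ∃ a ∈ H.1, (y k).1 n = Sum.inl a) := by
      by_contra hcon
      push Not at hcon
      have : ∀ᶠ k in (U : Filter ℕ), ∀ H ∈ Valpha V X α,
          ¬ ((y k).1 n = Sum.inr H ∨ ∃ a ∈ H.1, (y k).1 n = Sum.inl a) := by
        refine (eventually_all_finite hVf).2 fun H hH => ?_
        refine Ultrafilter.eventually_not.2 fun h => ?_
        obtain ⟨k, h1, h2⟩ := (Filter.Eventually.and (hcon H hH) h).exists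
        rcases h2 with h2 | ⟨a, ha, h2⟩
        · exact h1.1 h2
        · exact h1.2 a ha h2
      obtain ⟨k, h1, h2, h3⟩ := (this.and (hW.and hα')).exists
      have hmem : (y k).1 n ∈ FolS X (α.map Sum.inl) :=
        (mem_folS X α _).2 ⟨y k, hy k, fun i hi => h3 ⟨i, hi⟩, by rw [hl]⟩
      rcases hx : (y k).1 n with a | K
      · rw [hx] at hmem
        refine h2 a ⟨hmem, ?_⟩ hx
        intro ha
        simp only [mem_iUnion] at ha
        obtain ⟨H, hH, haH⟩ := ha
        exact h1 H hH (Or.inr ⟨a, haH, hx⟩)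
      · rw [hx] at hmem
        exact h1 K hmem (Or.inl hx)
    obtain ⟨H, hHV, hH⟩ := hex
    obtain ⟨φ, hφ, h⟩ := extraction_forall_of_frequently
      (P := fun m k => (∀ i : Fin α.length, (y k).1 i = Sum.inl (α[i])) ∧
        ((y k).1 n = Sum.inr H ∨ ∃ a ∈ H.1, (y k).1 n = Sum.inl a) ∧
        ∀ j : Fin (m + 1), ∀ a, (y j).1 n = Sum.inl a → (y k).1 n ≠ Sum.inl a)
      (fun m => hU _ (hα'.and (hH.and (eventually_all.2 fun j => by
        rcases hj : (y j).1 n with b | K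
        · filter_upwards [hn' b] with k hk a hab
          rw [← hab]
          exact hk
        · simp))))
    refine ⟨wordBlur α H, φ, hφ, ?_⟩
    rw [tendsto_tau]
    constructor
    · intro i a hi
      have hi : (if h : i < α.length then Sum.inl (α.get ⟨i, h⟩) else Sum.inr H)
        = Sum.inl a := hi
      split_ifs at hi with hlt
      rw [← hi]
      exact Eventually.of_forall fun k => (h k).1 ⟨i, hlt⟩
    · intro i K hj hi F hF
      have hi : (if h : i < α.length then Sum.inl (α.get ⟨i, h⟩) else Sum.inr H)
        = Sum.inr K := hi
      split_ifs at hi with hlt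
      have hK : H = K := Sum.inr.inj hi
      subst hK
      have hin : i = n := by
        by_contra hne
        obtain ⟨a, ha⟩ := hj n (by omega)
        have ha : (if h : n < α.length then Sum.inl (α.get ⟨n, h⟩) else Sum.inr H)
          = Sum.inl a := ha
        rw [dif_neg (by omega)] at ha
        simp at ha
      subst hin
      have hav : ∀ᶠ k in atTop, ∀ a ∈ F, (y (φ k)).1 n ≠ Sum.inl a := by
        refine (eventually_all_finite hF).2 fun a _ => ?_
        by_cases hj : ∃ j, (y j).1 n = Sum.inl a
        · obtain ⟨j, hj⟩ := hj
          filter_upwards [eventually_ge_atTop j] with k hk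
          exact (h k).2.2 ⟨j, by omega⟩ a hj
        · push Not at hj
          exact Eventually.of_forall fun k => hj _
      filter_upwards [hav] with k hk
      refine (h k).2.1.imp id ?_
      rintro ⟨a, ha, hka⟩
      exact ⟨a, ⟨ha, fun haF => hk a haF hka⟩, hka⟩

/-- If `X ⊆ Σ` is sequentially compact then for every word
`α ∈ B(X)` over `A` the sets `V_α` and `W_α` are finite; conversely, if `X` is
closed and all the sets `V_α`, `W_α` are finite, then `X` is sequentially compact. -/
theorem seqCompact_iff_finite_follower {A : Type*} (V : Set (Set A))
    (hV : IsBlurFamily V) (X : Set (FullBlur A V)) :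
    (@IsSeqCompact _ (tau A V) X →
      ∀ α : List A, InLangS X (α.map Sum.inl) →
        (Valpha V X α).Finite ∧ (Walpha V X α).Finite) ∧
    (@IsClosed _ (tau A V) X →
      (∀ α : List A, InLangS X (α.map Sum.inl) →
        (Valpha V X α).Finite ∧ (Walpha V X α).Finite) →
      @IsSeqCompact _ (tau A V) X) := by
  constructor
  · intro hX α _
    constructor
    · by_contra hinf
      have hinf : (Valpha V X α).Infinite := hinf
      obtain ⟨H, hH, b, ⟨b', hb, rfl⟩, c, ⟨c', hc, rfl⟩, hne, h1, h2⟩ :=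
        forward_aux X hX α (Sum.inr '' Valpha V X α)
          (hinf.image Sum.inr_injective.injOn) (by rintro _ ⟨K, hK, rfl⟩; exact hK)
      simp only [reduceCtorEq, and_false, exists_false, or_false] at h1 h2
      exact hne (h1.trans h2.symm)
    · by_contra hinf
      have hinf : (Walpha V X α).Infinite := hinf
      obtain ⟨H, hH, b, ⟨b', hb, rfl⟩, -, -, -, h1, -⟩ :=
        forward_aux X hX α (Sum.inl '' Walpha V X α)
          (hinf.image Sum.inl_injective.injOn) (by rintro _ ⟨K, hK, rfl⟩; exact hK.1)
      rcases h1 with h1 | ⟨a, ha, h1⟩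
      · simp at h1
      · obtain rfl := Sum.inl.inj h1
        exact hb.2 (mem_biUnion hH ha)
  · intro hcl hfin y hy
    obtain ⟨x, φ, hφ, hlim⟩ := backward_aux X hfin y hy
    refine ⟨x, ?_, φ, hφ, hlim⟩
    let _ := tau A V
    exact hcl.mem_of_tendsto hlim (Eventually.of_forall fun k => hy _)

end BlurPaper
end
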